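/- Every strictly proper rational m×m matrix function φ admits a minimal realization φ(λ) = iθ₁*(λI_N − β)⁻¹θ₂ with the additional symmetry property β − β* = i(θ₁θ₁* − θ₂θ₂*). -/

import Mathlib

open Matrix

/-! Suppose first that the realization is observable and controllable. By observability the matrices
`X ≥ 0` with `-i(γX - Xγᴴ) + ϑ₂ϑ₂ᴴ - Xϑ₁ϑ₁ᴴX ≥ 0` form a compact set. One of maximal trace solves
the Riccati equation, since otherwise a short implicit Euler step of the Riccati flow increases it,
and it is positive definite by controllability. Factoring `X = S Sᴴ` (for instance `S = X^{1/2}`)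
and changing the basis by `S` turns the Riccati equation into `β - βᴴ = i(θ₁θ₁ᴴ - θ₂θ₂ᴴ)`.

In general, an unobservable eigenvector splits off a one-dimensional state that does not contribute
to `φ`. Once the remaining states are symmetric, the lost one is put back, coupled to them on one
side only so that `φ` is unchanged. Uncontrollability is dual.
-/

open Metric in
theorem isBounded_of_isClosed_homogenization {E : Type*} [NormedAddCommGroup E] [NormedSpace ℝ E]
    [ProperSpace E] {S : Set E} {T : Set (ℝ × E)} (hT : IsClosed T)
    (hT_zero : ∀ y, (0, y) ∈ T → y = 0) (hST : ∀ x ∈ S, ∀ r : ℝ, 0 < r → (r, r • x) ∈ T) :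
    Bornology.IsBounded S := by
  have hsub : {0} ×ˢ sphere (0 : E) 1 ⊆ Tᶜ := by
    rintro ⟨_, y⟩ ⟨rfl, hy⟩ hyT
    exact ne_zero_of_mem_unit_sphere ⟨y, hy⟩ (hT_zero y hyT)
  obtain ⟨u, v, hu, -, h0u, hv, huv⟩ :=
    generalized_tube_lemma isCompact_singleton (isCompact_sphere _ _) hT.isOpen_compl hsub
  obtain ⟨δ, hδ, hδu⟩ := isOpen_iff.mp hu 0 (h0u rfl)
  refine isBounded_iff_forall_norm_le.mpr ⟨δ⁻¹, fun x hx ↦ ?_⟩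
  by_contra! hlt
  have hx0 : 0 < ‖x‖ := (inv_pos.mpr hδ).trans hlt
  refine huv ⟨hδu ?_, hv ?_⟩ (hST x hx ‖x‖⁻¹ (inv_pos.mpr hx0))
  · simpa using inv_lt_of_inv_lt₀ hδ hlt
  · simp [norm_smul, hx0.ne']

section LinearAlgebra

open scoped ComplexOrder

theorem range_mulVecLin_le_of_ker_le {K ι : Type*} [Field K] [StarRing K] [Fintype ι]
    {M Y : Matrix ι ι K} (hM : M.IsHermitian) (hY : Y.IsHermitian)
    (h : Y.mulVecLin.ker ≤ M.mulVecLin.ker) : M.mulVecLin.range ≤ Y.mulVecLin.range := by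
  classical
  rintro _ ⟨w, rfl⟩
  by_contra hw
  obtain ⟨f, hf, hYf⟩ := Submodule.exists_le_ker_of_notMem hw
  obtain ⟨u, rfl⟩ := (dotProductEquiv K ι).surjective f
  have huY : u ᵥ* Y = 0 := dotProduct_eq_zero _ fun x ↦ by
    simpa [dotProduct_mulVec] using hYf ⟨x, rfl⟩
  have hYu : Y *ᵥ star u = 0 := by simpa [star_vecMul, hY.eq] using congrArg star huY
  have huM : u ᵥ* M = 0 := by simpa [star_mulVec, hM.eq] using congrArg star (h hYu)
  exact hf (by simp [dotProduct_mulVec, huM])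

theorem star_dotProduct_lyapunov_mulVec {R ι : Type*} [CommRing R] [StarRing R] [Fintype ι]
    {Y : Matrix ι ι R} (hY : Y.IsHermitian) (A : Matrix ι ι R) {v : ι → R} (hv : Y *ᵥ v = 0) :
    star v ⬝ᵥ ((A * Y + Y * Aᴴ) *ᵥ v) = 0 := by
  have hvY : star v ᵥ* Y = 0 := by rw [← hY.eq, ← star_mulVec, hv, star_zero]
  simp [add_mulVec, ← mulVec_mulVec, hv, dotProduct_mulVec _ Y, hvY]

theorem isClosed_setOf_posSemidef {𝕜 ι : Type*} [RCLike 𝕜] [Finite ι] :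
    IsClosed {X : Matrix ι ι 𝕜 | X.PosSemidef} := by
  have := Fintype.ofFinite ι
  simp only [posSemidef_iff_dotProduct_mulVec, Set.ofPred_and, Set.ofPred_forall]
  refine (isClosed_eq (by fun_prop) (by fun_prop)).inter (isClosed_iInter fun x ↦ ?_)
  exact isClosed_le continuous_const (by fun_prop)

/-- Observability of the pair `(C, A)`, encoded by the Popov–Belevitch–Hautus test: no eigenvector
of `A` lies in the kernel of `C`. Controllability of `(A, B)` is observability of `(Bᴴ, Aᴴ)`. -/
def IsObservable {K ι ν : Type*} [CommSemiring K] [Fintype ι] (A : Matrix ι ι K)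
    (C : Matrix ν ι K) : Prop :=
  ∀ (e : K) (v : ι → K), A *ᵥ v = e • v → C *ᵥ v = 0 → v = 0

theorem IsObservable.smul {K ι ν : Type*} [Field K] [Fintype ι] {A : Matrix ι ι K}
    {C : Matrix ν ι K} (h : IsObservable A C) {c : K} (hc : c ≠ 0) : IsObservable (c • A) C := by
  refine fun e v hv hCv ↦ h (c⁻¹ * e) v ?_ hCv
  rw [mul_smul, ← hv, smul_mulVec, inv_smul_smul₀ hc]

theorem IsObservable.conjTranspose_mul_self {K ι ν : Type*} [Field K] [PartialOrder K]
    [StarRing K] [StarOrderedRing K] [Fintype ι] [Fintype ν] {A : Matrix ι ι K}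
    {C : Matrix ν ι K} (h : IsObservable A C) : IsObservable A (Cᴴ * C) :=
  fun e v hv hCv ↦ h e v hv ((conjTranspose_mul_self_mulVec_eq_zero C v).mp hCv)

theorem IsObservable.eq_bot_of_invariant {K ι ν : Type*} [Field K] [IsAlgClosed K] [Fintype ι]
    {A : Matrix ι ι K} {C : Matrix ν ι K} (h : IsObservable A C) {W : Submodule K (ι → K)}
    (hA : ∀ w ∈ W, A *ᵥ w ∈ W) (hC : ∀ w ∈ W, C *ᵥ w = 0) : W = ⊥ := by
  by_contra hW
  have : Nontrivial W := W.nontrivial_iff_ne_bot.mpr hW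
  obtain ⟨e, he⟩ := Module.End.exists_eigenvalue (A.mulVecLin.restrict hA)
  obtain ⟨v, hv⟩ := he.exists_hasEigenvector
  exact hv.2 (Subtype.ext (h e v (congrArg Subtype.val hv.apply_eq_smul) (hC v v.2)))

end LinearAlgebra

section Riccati

open scoped ComplexOrder

variable {ι : Type*} [Fintype ι] {A Q K X : Matrix ι ι ℂ}

/-- The left-hand side of the Riccati equation `A X + X Aᴴ + Q - X K X = 0`. For `A = -iγ`,
`Q = ϑ₂ϑ₂ᴴ` and `K = ϑ₁ϑ₁ᴴ` this is the equation `γX - Xγᴴ = i(Xϑ₁ϑ₁ᴴX - ϑ₂ϑ₂ᴴ)`. -/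
def riccati (A Q K X : Matrix ι ι ℂ) : Matrix ι ι ℂ :=
  A * X + X * Aᴴ + Q - X * K * X

theorem riccati_add (A Q : Matrix ι ι ℂ) (hK : K.IsHermitian) (hX : X.IsHermitian)
    (D : Matrix ι ι ℂ) :
    riccati A Q K (X + D) =
      riccati A Q K X + (A - X * K) * D + D * (A - X * K)ᴴ - D * K * D := by
  simp only [riccati, conjTranspose_sub, conjTranspose_mul, hK.eq, hX.eq]
  noncomm_ring

open scoped MatrixOrder Matrix.Norms.L2Operator in
theorem posSemidef_sub_mul_mul_self [DecidableEq ι] {B : Matrix ι ι ℂ} (hK : K.PosSemidef)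
    (h : ‖Bᴴ * K * B‖ ≤ 1) : (B * Bᴴ - (B * Bᴴ) * K * (B * Bᴴ)).PosSemidef := by
  have hle : Bᴴ * K * B ≤ 1 :=
    (CStarAlgebra.norm_le_one_iff_of_nonneg _ (hK.conjTranspose_mul_mul_same B).nonneg).mp h
  have h := (le_iff.mp hle).mul_mul_conjTranspose_same B
  simpa only [Matrix.mul_sub, Matrix.sub_mul, Matrix.mul_one, Matrix.mul_assoc] using h

open scoped Matrix.Norms.L2Operator MatrixOrder in
theorem exists_resolvent_factorization {R : Matrix ι ι ℂ} [DecidableEq ι] (hR : R.PosSemidef)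
    (hK : K.PosSemidef) (F : Matrix ι ι ℂ) :
    ∃ (ε : ℝ) (P : Matrix ι ι ℂ), 0 < ε ∧ P.PosSemidef ∧
      (1 - ε • F) * P * (1 - ε • F)ᴴ = R ∧ (P - ε ^ 2 • (P * K * P)).PosSemidef := by
  obtain ⟨C, rfl⟩ := CStarAlgebra.nonneg_iff_eq_mul_star_self.mp hR.nonneg
  let B : ℝ → Matrix ι ι ℂ := fun ε ↦ Ring.inverse (1 - ε • F) * C
  have hB : ContinuousAt B 0 := by
    have : ContinuousAt Ring.inverse (1 - (0 : ℝ) • F) := by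
      simpa using NormedRing.inverse_continuousAt (1 : (Matrix ι ι ℂ)ˣ)
    exact (this.comp (f := fun ε : ℝ ↦ 1 - ε • F) (by fun_prop)).mul continuousAt_const
  have hsmall : ∀ᶠ ε in nhds (0 : ℝ), ‖(B ε)ᴴ * (ε ^ 2 • K) * B ε‖ < 1 := by
    have : ContinuousAt (fun ε ↦ ‖(B ε)ᴴ * (ε ^ 2 • K) * B ε‖) 0 := by
      have h' : ContinuousAt (fun ε ↦ (B ε)ᴴ) 0 := hB.star
      fun_prop
    exact this.eventually_lt_const (by simp)
  have hunit : ∀ᶠ ε in nhds (0 : ℝ), IsUnit (1 - ε • F) :=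
    (by fun_prop : ContinuousAt (fun ε : ℝ ↦ 1 - ε • F) 0).eventually
      (Units.isOpen.mem_nhds (by simp))
  obtain ⟨ε, ⟨hεK, hεF⟩, hε⟩ :=
    (((hsmall.and hunit).filter_mono nhdsWithin_le_nhds).and self_mem_nhdsWithin :
      ∀ᶠ ε in nhdsWithin (0 : ℝ) (Set.Ioi 0), _).exists
  refine ⟨ε, B ε * (B ε)ᴴ, hε, posSemidef_self_mul_conjTranspose _, ?_, ?_⟩
  · have hC : (1 - ε • F) * B ε = C := Ring.mul_inverse_cancel_left _ _ hεF
    rw [← Matrix.mul_assoc, hC, Matrix.mul_assoc, ← conjTranspose_mul, hC, star_eq_conjTranspose]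
  · have := posSemidef_sub_mul_mul_self (hK.smul (sq_nonneg ε)) hεK.le
    simpa only [mul_smul_comm, smul_mul_assoc] using this

-- `D` is one implicit Euler step of the flow `Ẋ = riccati A Q K X`, which keeps `D` nonnegative.
theorem exists_riccati_add_posSemidef (hK : K.PosSemidef) (hX : X.IsHermitian)
    (hR : (riccati A Q K X).PosSemidef) (hR0 : riccati A Q K X ≠ 0) :
    ∃ D : Matrix ι ι ℂ, D.PosSemidef ∧ D ≠ 0 ∧ (riccati A Q K (X + D)).PosSemidef := by
  classical
  set F := A - X * K with hF
  obtain ⟨ε, P, hε, hP, hPR, hPK⟩ := exists_resolvent_factorization hR hK F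
  refine ⟨ε • P, hP.smul hε.le, smul_ne_zero hε.ne' ?_, ?_⟩
  · rintro rfl
    exact hR0 (by simpa using hPR.symm)
  · convert hPK.add ((hP.mul_mul_conjTranspose_same F).smul (sq_nonneg ε)) using 1
    rw [riccati_add A Q hK.isHermitian hX, ← hPR, ← hF, conjTranspose_sub, conjTranspose_one,
      conjTranspose_smul, star_trivial]
    simp only [mul_sub, sub_mul, smul_mul_assoc, mul_smul_comm, one_mul, mul_one]
    module

theorem eq_zero_of_lyapunov_posSemidef {ν : Type*} {C : Matrix ν ι ℂ} {Y : Matrix ι ι ℂ}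
    (hAC : IsObservable A C) (hY : Y.IsHermitian) (hCY : C * Y = 0)
    (hL : (A * Y + Y * Aᴴ).PosSemidef) : Y = 0 := by
  have hker : Y.mulVecLin.ker ≤ (A * Y + Y * Aᴴ).mulVecLin.ker := fun v hv ↦
    (hL.dotProduct_mulVec_zero_iff v).mp (star_dotProduct_lyapunov_mulVec hY A hv)
  have hrange := range_mulVecLin_le_of_ker_le hL.isHermitian hY hker
  have hinv : ∀ w ∈ Y.mulVecLin.range, A *ᵥ w ∈ Y.mulVecLin.range := by
    rintro _ ⟨w, rfl⟩
    have := sub_mem (hrange ⟨w, rfl⟩) (LinearMap.mem_range_self Y.mulVecLin (Aᴴ *ᵥ w))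
    simpa [add_mulVec] using this
  have hbot := hAC.eq_bot_of_invariant hinv (by rintro _ ⟨w, rfl⟩; simp [hCY])
  classical
  exact ext_of_mulVec_single fun i ↦
    (LinearMap.congr_fun (LinearMap.range_eq_bot.mp hbot) _).trans (zero_mulVec _).symm

open scoped MatrixOrder in
theorem mul_eq_zero_of_neg_mul_mul_posSemidef {Y : Matrix ι ι ℂ} (hK : K.PosSemidef)
    (hY : Y.IsHermitian) (h : (-(Y * K * Y)).PosSemidef) : K * Y = 0 := by
  have hYKY : Y * K * Y = 0 := by
    have := hK.conjTranspose_mul_mul_same Y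
    rw [hY.eq] at this
    exact le_antisymm (neg_nonneg.mp h.nonneg) this.nonneg
  classical
  refine ext_of_mulVec_single fun i ↦ ?_
  rw [← mulVec_mulVec, zero_mulVec, ← hK.dotProduct_mulVec_zero_iff, star_mulVec, hY.eq,
    dotProduct_mulVec, vecMul_vecMul, dotProduct_mulVec, vecMul_vecMul, hYKY, vecMul_zero,
    zero_dotProduct]

-- The rescaled pairs `(r, r • X)` satisfy closed conditions which, at `r = 0`, degenerate to
-- `Y K Y ≤ 0` and `A Y + Y Aᴴ ≥ 0`, so that observability forces `Y = 0`.
open scoped Matrix.Norms.L2Operator in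
theorem isCompact_riccati_subsolutions (Q : Matrix ι ι ℂ) (hK : K.PosSemidef)
    (hAK : IsObservable A K) :
    IsCompact {X : Matrix ι ι ℂ | X.PosSemidef ∧ (riccati A Q K X).PosSemidef} := by
  classical
  have : ProperSpace (Matrix ι ι ℂ) := FiniteDimensional.proper ℂ _
  refine Metric.isCompact_of_isClosed_isBounded ?_ ?_
  · refine isClosed_setOf_posSemidef.inter (isClosed_setOf_posSemidef.preimage ?_)
    unfold riccati
    fun_prop
  let T : Set (ℝ × Matrix ι ι ℂ) := {p | p.2.PosSemidef ∧
    (p.1 • (A * p.2 + p.2 * Aᴴ) + p.1 ^ 2 • Q - p.2 * K * p.2).PosSemidef ∧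
    (A * p.2 + p.2 * Aᴴ + p.1 • Q).PosSemidef}
  have hT : IsClosed T := by
    refine (isClosed_setOf_posSemidef.preimage ?_).inter
      ((isClosed_setOf_posSemidef.preimage ?_).inter (isClosed_setOf_posSemidef.preimage ?_)) <;>
    fun_prop
  refine isBounded_of_isClosed_homogenization hT ?_ ?_
  · rintro Y ⟨hY, hYKY, hAY⟩
    have hKY := mul_eq_zero_of_neg_mul_mul_posSemidef hK hY.isHermitian (by simpa using hYKY)
    exact eq_zero_of_lyapunov_posSemidef hAK hY.isHermitian hKY (by simpa using hAY)
  · rintro X ⟨hX, hR⟩ r hr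
    refine ⟨hX.smul hr.le, ?_, ?_⟩
    · convert hR.smul (sq_nonneg r) using 1
      simp only [riccati, smul_mul_assoc, mul_smul_comm]
      module
    · have hXKX := hK.mul_mul_conjTranspose_same X
      rw [hX.isHermitian.eq] at hXKX
      convert (hR.add hXKX).smul hr.le using 1
      simp only [riccati, smul_mul_assoc, mul_smul_comm]
      module

theorem exists_posSemidef_riccati_eq_zero (hQ : Q.PosSemidef) (hK : K.PosSemidef)
    (hAK : IsObservable A K) : ∃ X : Matrix ι ι ℂ, X.PosSemidef ∧ riccati A Q K X = 0 := by
  classical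
  have hzero : (0 : Matrix ι ι ℂ).PosSemidef ∧ (riccati A Q K 0).PosSemidef :=
    ⟨.zero, by simpa [riccati] using hQ⟩
  obtain ⟨X, ⟨hX, hR⟩, hmax⟩ := (isCompact_riccati_subsolutions Q hK hAK).exists_isMaxOn
    ⟨0, hzero⟩ (f := fun X ↦ X.trace.re) (by fun_prop)
  refine ⟨X, hX, by_contra fun hR0 ↦ ?_⟩
  obtain ⟨D, hD, hD0, hRD⟩ := exists_riccati_add_posSemidef hK hX.isHermitian hR hR0
  have htrace : 0 < D.trace := hD.trace_nonneg.lt_of_ne' (mt hD.trace_eq_zero_iff.mp hD0)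
  have hle : (X + D).trace.re ≤ X.trace.re := hmax ⟨hX.add hD, hRD⟩
  rw [trace_add, Complex.add_re] at hle
  linarith [(Complex.pos_iff.mp htrace).1]

theorem posDef_of_riccati_eq_zero (hQ : Q.PosSemidef) (hAQ : IsObservable Aᴴ Q)
    (hX : X.PosSemidef) (h : riccati A Q K X = 0) : X.PosDef := by
  classical
  have hric : ∀ v, X *ᵥ v = 0 → (A * X + X * Aᴴ) *ᵥ v + Q *ᵥ v = 0 := fun v hv ↦ by
    simpa [riccati, add_mulVec, sub_mulVec, ← mulVec_mulVec, hv] using congrArg (· *ᵥ v) h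
  have hkerQ : ∀ v, X *ᵥ v = 0 → Q *ᵥ v = 0 := fun v hv ↦ by
    have := congrArg (star v ⬝ᵥ ·) (hric v hv)
    rwa [dotProduct_add, star_dotProduct_lyapunov_mulVec hX.isHermitian A hv, zero_add,
      dotProduct_zero, hQ.dotProduct_mulVec_zero_iff] at this
  have hinv : ∀ v, X *ᵥ v = 0 → X *ᵥ (Aᴴ *ᵥ v) = 0 := fun v hv ↦ by
    simpa [hkerQ v hv, add_mulVec, ← mulVec_mulVec, hv] using hric v hv
  have hker : X.mulVecLin.ker = ⊥ := hAQ.eq_bot_of_invariant hinv hkerQ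
  exact hX.posDef_iff_isUnit.mpr (mulVec_injective_iff_isUnit.mp (LinearMap.ker_eq_bot.mp hker))

theorem mul_riccati_mul_conjTranspose [DecidableEq ι] (A Q K : Matrix ι ι ℂ) {S T : Matrix ι ι ℂ}
    (hTS : T * S = 1) :
    T * riccati A Q K (S * Sᴴ) * Tᴴ = riccati (T * A * S) (T * Q * Tᴴ) (Sᴴ * K * S) 1 := by
  have hST : Sᴴ * Tᴴ = 1 := by rw [← conjTranspose_mul, hTS, conjTranspose_one]
  have hTS' (M : Matrix ι ι ℂ) : T * (S * M) = M := by rw [← Matrix.mul_assoc, hTS, one_mul]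
  simp only [riccati, mul_add, add_mul, mul_sub, sub_mul, mul_one, one_mul, Matrix.mul_assoc,
    conjTranspose_mul, hST, hTS']

theorem sub_conjTranspose_of_riccati_eq_zero [DecidableEq ι] {ν : Type*} [Fintype ν]
    {γ S T : Matrix ι ι ℂ} {ϑ₁ ϑ₂ : Matrix ι ν ℂ} (hTS : T * S = 1)
    (h : riccati (-Complex.I • γ) (ϑ₂ * ϑ₂ᴴ) (ϑ₁ * ϑ₁ᴴ) (S * Sᴴ) = 0) :
    T * γ * S - (T * γ * S)ᴴ =
      Complex.I • ((Sᴴ * ϑ₁) * (Sᴴ * ϑ₁)ᴴ - (T * ϑ₂) * (T * ϑ₂)ᴴ) := by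
  have hT := mul_riccati_mul_conjTranspose (-Complex.I • γ) (ϑ₂ * ϑ₂ᴴ) (ϑ₁ * ϑ₁ᴴ) hTS
  rw [h, mul_zero, zero_mul] at hT
  have hric : (Sᴴ * ϑ₁) * (Sᴴ * ϑ₁)ᴴ - (T * ϑ₂) * (T * ϑ₂)ᴴ =
      -Complex.I • (T * γ * S - (T * γ * S)ᴴ) := by
    rw [← sub_eq_zero, ← neg_eq_zero, hT]
    simp only [riccati, conjTranspose_mul, conjTranspose_conjTranspose, conjTranspose_neg,
      conjTranspose_smul, RCLike.star_def, Complex.conj_I, neg_neg, neg_smul, smul_sub, mul_neg,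
      neg_mul, mul_smul_comm, smul_mul_assoc, mul_one, one_mul, Matrix.mul_assoc]
    abel
  rw [hric, smul_smul, mul_neg, Complex.I_mul_I, neg_neg, one_smul]

end Riccati

section Realization

theorem smul_one_sub_fromBlocks {R ι κ : Type*} [Ring R] [DecidableEq ι]
    [DecidableEq κ] (r : R) (A : Matrix ι ι R) (B : Matrix ι κ R) (C : Matrix κ ι R)
    (D : Matrix κ κ R) :
    r • (1 : Matrix (ι ⊕ κ) (ι ⊕ κ) R) - fromBlocks A B C D =
      fromBlocks (r • 1 - A) (-B) (-C) (r • 1 - D) := by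
  ext (i | i) (j | j) <;> simp [one_apply]

theorem fromBlocks_sub_conjTranspose_eq {ι κ ν : Type*} [Fintype ν] {β : Matrix ι ι ℂ}
    {E : Matrix κ κ ℂ} {θ₁ θ₂ : Matrix ι ν ℂ} {d₁ d₂ : Matrix κ ν ℂ}
    (hβ : β - βᴴ = Complex.I • (θ₁ * θ₁ᴴ - θ₂ * θ₂ᴴ))
    (hE : E - Eᴴ = Complex.I • (d₁ * d₁ᴴ - d₂ * d₂ᴴ)) :
    fromBlocks β (Complex.I • (θ₁ * d₁ᴴ)) (-(Complex.I • (d₂ * θ₂ᴴ))) E -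
        (fromBlocks β (Complex.I • (θ₁ * d₁ᴴ)) (-(Complex.I • (d₂ * θ₂ᴴ))) E)ᴴ =
      Complex.I • (fromRows θ₁ d₁ * (fromRows θ₁ d₁)ᴴ - fromRows θ₂ d₂ * (fromRows θ₂ d₂)ᴴ) := by
  simp only [fromBlocks_conjTranspose, conjTranspose_fromRows_eq_fromCols_conjTranspose,
    fromRows_mul_fromCols, sub_eq_add_neg, fromBlocks_neg, fromBlocks_add, fromBlocks_smul]
  rw [← sub_eq_add_neg β, ← sub_eq_add_neg E, hβ, hE]
  congr 1 <;> simp [add_comm]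

variable {ι κ ν : Type*} [Fintype ι] [DecidableEq ι] [Fintype κ] [DecidableEq κ]

/-- The state-space realization `φ(λ) = i ϑ₁ᴴ (λ - γ)⁻¹ ϑ₂`. The values of `φ` on the spectrum of
`γ` are unconstrained. -/
def IsRealization (φ : ℂ → Matrix ν ν ℂ) (γ : Matrix ι ι ℂ) (ϑ₁ ϑ₂ : Matrix ι ν ℂ) : Prop :=
  ∀ lam : ℂ, IsUnit (lam • (1 : Matrix ι ι ℂ) - γ) →
    φ lam = Complex.I • (ϑ₁ᴴ * (lam • (1 : Matrix ι ι ℂ) - γ)⁻¹ * ϑ₂)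

variable (ι) in
/-- `φ` has a realization with state space `ℂ^ι` and the symmetry property
`β - βᴴ = i (θ₁θ₁ᴴ - θ₂θ₂ᴴ)`. -/
def HasSymmetricRealization [Fintype ν] (φ : ℂ → Matrix ν ν ℂ) : Prop :=
  ∃ (β : Matrix ι ι ℂ) (θ₁ θ₂ : Matrix ι ν ℂ), IsRealization φ β θ₁ θ₂ ∧
    β - βᴴ = Complex.I • (θ₁ * θ₁ᴴ - θ₂ * θ₂ᴴ)

variable {φ : ℂ → Matrix ν ν ℂ} {γ : Matrix ι ι ℂ} {ϑ₁ ϑ₂ : Matrix ι ν ℂ}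

theorem IsRealization.conj (h : IsRealization φ γ ϑ₁ ϑ₂) {S : Matrix ι κ ℂ} {T : Matrix κ ι ℂ}
    (hST : S * T = 1) : IsRealization φ (T * γ * S) (Sᴴ * ϑ₁) (T * ϑ₂) := by
  intro lam hunit
  set N := lam • (1 : Matrix κ κ ℂ) - T * γ * S with hN
  have hSN : (lam • (1 : Matrix ι ι ℂ) - γ) * S = S * N := by
    simp [hN, Matrix.sub_mul, Matrix.mul_sub, ← Matrix.mul_assoc, hST]
  have hright : (lam • (1 : Matrix ι ι ℂ) - γ) * (S * N⁻¹ * T) = 1 := by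
    rw [← Matrix.mul_assoc, ← Matrix.mul_assoc, hSN,
      mul_nonsing_inv_cancel_right _ _ ((isUnit_iff_isUnit_det N).mp hunit), hST]
  rw [h lam (IsUnit.of_mul_eq_one _ hright), inv_eq_right_inv hright, conjTranspose_mul,
    conjTranspose_conjTranspose]
  simp only [Matrix.mul_assoc]

theorem IsRealization.adjoint (h : IsRealization φ γ ϑ₁ ϑ₂) :
    IsRealization (fun lam ↦ -(φ (star lam))ᴴ) γᴴ ϑ₂ ϑ₁ := by
  intro lam hunit
  have hadj : (star lam • (1 : Matrix ι ι ℂ) - γ)ᴴ = lam • (1 : Matrix ι ι ℂ) - γᴴ := by simp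
  rw [← hadj, isUnit_conjTranspose] at hunit
  simp only [h _ hunit, ← hadj, conjTranspose_smul, conjTranspose_mul, conjTranspose_nonsing_inv,
    conjTranspose_conjTranspose, Matrix.mul_assoc]
  simp

theorem HasSymmetricRealization.of_adjoint [Fintype ν]
    (h : HasSymmetricRealization ι (fun lam ↦ -(φ (star lam))ᴴ)) :
    HasSymmetricRealization ι φ := by
  obtain ⟨β, θ₁, θ₂, hβ, hsymm⟩ := h
  refine ⟨βᴴ, θ₂, θ₁, by simpa using hβ.adjoint, ?_⟩
  rw [conjTranspose_conjTranspose, ← neg_sub, hsymm, ← smul_neg, neg_sub]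

theorem IsRealization.reindex (e : ι ≃ κ) (h : IsRealization φ γ ϑ₁ ϑ₂) :
    IsRealization φ (γ.submatrix e.symm e.symm) (ϑ₁.submatrix e.symm id)
      (ϑ₂.submatrix e.symm id) := by
  intro lam hunit
  have hsub : lam • (1 : Matrix κ κ ℂ) - γ.submatrix e.symm e.symm =
      (lam • (1 : Matrix ι ι ℂ) - γ).submatrix e.symm e.symm := by
    simp [submatrix_sub, submatrix_smul]
  rw [hsub, isUnit_submatrix_equiv] at hunit
  rw [h lam hunit, hsub, inv_submatrix_equiv, conjTranspose_submatrix, submatrix_mul_equiv,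
    submatrix_mul_equiv, submatrix_id_id]

theorem HasSymmetricRealization.reindex [Fintype ν] (e : ι ≃ κ)
    (h : HasSymmetricRealization ι φ) : HasSymmetricRealization κ φ := by
  obtain ⟨β, θ₁, θ₂, hβ, hsymm⟩ := h
  refine ⟨_, _, _, hβ.reindex e, ?_⟩
  exact congrArg (fun M ↦ M.submatrix e.symm e.symm) hsymm

theorem isRealization_fromBlocks_zero₁₂_iff {α : Matrix ι ι ℂ} {y : Matrix κ ι ℂ}
    {E : Matrix κ κ ℂ} {a c : Matrix ι ν ℂ} {z : Matrix κ ν ℂ} :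
    IsRealization φ (fromBlocks α 0 y E) (fromRows a 0) (fromRows c z) ↔
      ∀ lam : ℂ, IsUnit (lam • (1 : Matrix ι ι ℂ) - α) → IsUnit (lam • (1 : Matrix κ κ ℂ) - E) →
        φ lam = Complex.I • (aᴴ * (lam • (1 : Matrix ι ι ℂ) - α)⁻¹ * c) := by
  rw [IsRealization]
  refine forall_congr' fun lam ↦ ?_
  rw [smul_one_sub_fromBlocks, neg_zero, isUnit_fromBlocks_zero₁₂, and_imp]
  refine forall₂_congr fun hα hE ↦ ?_
  rw [inv_fromBlocks_zero₁₂_of_isUnit_iff _ _ _ (iff_of_true hα hE),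
    conjTranspose_fromRows_eq_fromCols_conjTranspose, fromCols_mul_fromBlocks,
    fromCols_mul_fromRows]
  simp

theorem isRealization_fromBlocks_zero₂₁_iff {α : Matrix ι ι ℂ} {x : Matrix ι κ ℂ}
    {E : Matrix κ κ ℂ} {a c : Matrix ι ν ℂ} {b : Matrix κ ν ℂ} :
    IsRealization φ (fromBlocks α x 0 E) (fromRows a b) (fromRows c 0) ↔
      ∀ lam : ℂ, IsUnit (lam • (1 : Matrix ι ι ℂ) - α) → IsUnit (lam • (1 : Matrix κ κ ℂ) - E) →
        φ lam = Complex.I • (aᴴ * (lam • (1 : Matrix ι ι ℂ) - α)⁻¹ * c) := by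
  rw [IsRealization]
  refine forall_congr' fun lam ↦ ?_
  rw [smul_one_sub_fromBlocks, neg_zero, isUnit_fromBlocks_zero₂₁, and_imp]
  refine forall₂_congr fun hα hE ↦ ?_
  rw [inv_fromBlocks_zero₂₁_of_isUnit_iff _ _ _ (iff_of_true hα hE),
    conjTranspose_fromRows_eq_fromCols_conjTranspose, fromCols_mul_fromBlocks,
    fromCols_mul_fromRows]
  simp

theorem isUnit_smul_one_sub_smul_one_unit {lam e : ℂ} :
    IsUnit (lam • (1 : Matrix Unit Unit ℂ) - e • 1) ↔ lam ≠ e := by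
  simp [isUnit_iff_isUnit_det, ← sub_smul, sub_eq_zero]

theorem exists_smul_one_sub_conjTranspose_eq [Fintype ν] [Nonempty ν] (e : ℂ) :
    ∃ d₁ d₂ : Matrix Unit ν ℂ, (d₁ = 0 ∨ d₂ = 0) ∧
      e • (1 : Matrix Unit Unit ℂ) - (e • 1)ᴴ = Complex.I • (d₁ * d₁ᴴ - d₂ * d₂ᴴ) := by
  classical
  obtain ⟨j⟩ := ‹Nonempty ν›
  rcases le_total 0 e.im with him | him
  · refine ⟨single () j (√(e.im + e.im) : ℂ), 0, .inr rfl, ?_⟩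
    have hsq := Real.mul_self_sqrt (add_nonneg him him)
    ext
    simp [conjTranspose_single, ← Complex.ofReal_mul, hsq, Complex.ext_iff]
  · refine ⟨0, single () j (√(-e.im + -e.im) : ℂ), .inl rfl, ?_⟩
    have hsq := Real.mul_self_sqrt (add_nonneg (neg_nonneg.mpr him) (neg_nonneg.mpr him))
    ext
    simp [conjTranspose_single, ← Complex.ofReal_mul, hsq, Complex.ext_iff]

theorem HasSymmetricRealization.sum_unit [Fintype ν] [Nonempty ν] {e : ℂ} {w : Matrix ν ν ℂ}
    (h : HasSymmetricRealization ι (Function.update φ e w)) :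
    HasSymmetricRealization (ι ⊕ Unit) φ := by
  obtain ⟨β, θ₁, θ₂, hβ, hsymm⟩ := h
  have hφ : ∀ lam, IsUnit (lam • (1 : Matrix ι ι ℂ) - β) →
      IsUnit (lam • (1 : Matrix Unit Unit ℂ) - e • 1) →
      φ lam = Complex.I • (θ₁ᴴ * (lam • (1 : Matrix ι ι ℂ) - β)⁻¹ * θ₂) := fun lam hlam he ↦ by
    rw [← hβ lam hlam, Function.update_of_ne (isUnit_smul_one_sub_smul_one_unit.mp he)]
  obtain ⟨d₁, d₂, hd, he⟩ := exists_smul_one_sub_conjTranspose_eq (ν := ν) e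
  refine ⟨_, fromRows θ₁ d₁, fromRows θ₂ d₂, ?_, fromBlocks_sub_conjTranspose_eq hsymm he⟩
  -- One of the off-diagonal blocks prescribed by the symmetry vanishes, so `φ` is unchanged.
  rcases hd with rfl | rfl
  · simpa using isRealization_fromBlocks_zero₁₂_iff.mpr hφ
  · simpa using isRealization_fromBlocks_zero₂₁_iff.mpr hφ

theorem exists_mul_eq_one_mulVec_single (e : ι ≃ κ) {v : ι → ℂ} (hv : v ≠ 0) (k : κ) :
    ∃ (S : Matrix ι κ ℂ) (T : Matrix κ ι ℂ), S * T = 1 ∧ T * S = 1 ∧ S *ᵥ Pi.single k 1 = v := by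
  obtain ⟨g, hg⟩ := SeparatingDual.exists_continuousLinearEquiv_apply_eq (R := ℂ)
    (x := Pi.single (e.symm k) 1) (by simp) hv
  let f : (κ → ℂ) ≃ₗ[ℂ] (ι → ℂ) := LinearEquiv.funCongrLeft ℂ ℂ e ≪≫ₗ g.toLinearEquiv
  refine ⟨LinearMap.toMatrix' f, LinearMap.toMatrix' f.symm, ?_, ?_, ?_⟩
  · simp [← LinearMap.toMatrix'_comp]
  · simp [← LinearMap.toMatrix'_comp]
  · have hsingle : LinearEquiv.funCongrLeft ℂ ℂ e (Pi.single k 1) = Pi.single (e.symm k) 1 := by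
      ext i
      simp [Pi.single_apply, Equiv.eq_symm_apply]
    rw [LinearMap.toMatrix'_mulVec, ← hg, ← hsingle]
    rfl

theorem isRealization_update {e : ℂ} (h : ∀ lam : ℂ, IsUnit (lam • (1 : Matrix ι ι ℂ) - γ) →
    lam ≠ e → φ lam = Complex.I • (ϑ₁ᴴ * (lam • (1 : Matrix ι ι ℂ) - γ)⁻¹ * ϑ₂)) :
    IsRealization
      (Function.update φ e (Complex.I • (ϑ₁ᴴ * (e • (1 : Matrix ι ι ℂ) - γ)⁻¹ * ϑ₂))) γ ϑ₁ ϑ₂ := by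
  intro lam hlam
  rcases eq_or_ne lam e with rfl | hne
  · exact Function.update_self ..
  · rw [Function.update_of_ne hne, h lam hlam hne]

-- A realization does not constrain `φ` on the spectrum, so once the unobservable eigenvalue `e`
-- has been split off, the value at `e` has to be redefined.
theorem IsRealization.exists_update_of_not_isObservable (h : IsRealization φ γ ϑ₁ ϑ₂)
    (hγ : ¬ IsObservable γ ϑ₁ᴴ) (f : ι ≃ κ ⊕ Unit) :
    ∃ (e : ℂ) (w : Matrix ν ν ℂ) (α : Matrix κ κ ℂ) (a c : Matrix κ ν ℂ),
      IsRealization (Function.update φ e w) α a c := by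
  simp only [IsObservable, not_forall] at hγ
  obtain ⟨e, v, hev, hϑv, hv⟩ := hγ
  obtain ⟨S, T, hST, hTS, hSv⟩ := exists_mul_eq_one_mulVec_single f hv (Sum.inr () : κ ⊕ Unit)
  have hγ_col : (T * γ * S).col (.inr ()) = e • Pi.single (.inr ()) 1 := by
    rw [← mulVec_single_one, ← mulVec_mulVec, hSv, ← mulVec_mulVec, hev, mulVec_smul, ← hSv,
      mulVec_mulVec, hTS, one_mulVec]
  have hϑ_col : (Sᴴ * ϑ₁)ᴴ.col (.inr ()) = 0 := by
    rw [← mulVec_single_one, conjTranspose_mul, conjTranspose_conjTranspose, ← mulVec_mulVec, hSv,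
      hϑv]
  have h₁₂ : (T * γ * S).toBlocks₁₂ = 0 := by
    ext i
    simpa [toBlocks₁₂] using congrFun hγ_col (.inl i)
  have h₂₂ : (T * γ * S).toBlocks₂₂ = e • 1 := by
    ext
    simpa [toBlocks₂₂] using congrFun hγ_col (.inr ())
  have h₂ : (Sᴴ * ϑ₁).toRows₂ = 0 := by
    ext _ j
    exact star_eq_zero.mp (congrFun hϑ_col j)
  have hblock := h.conj hST
  rw [← fromBlocks_toBlocks (T * γ * S), h₁₂, h₂₂, ← fromRows_toRows (Sᴴ * ϑ₁), h₂,
    ← fromRows_toRows (T * ϑ₂), isRealization_fromBlocks_zero₁₂_iff] at hblock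
  refine ⟨e, _, _, _, _, isRealization_update fun lam hlam hne ↦ hblock lam hlam
    (isUnit_smul_one_sub_smul_one_unit.mpr hne)⟩

open scoped ComplexOrder MatrixOrder Matrix.Norms.L2Operator in
theorem IsRealization.hasSymmetricRealization_of_isObservable [Fintype ν]
    (h : IsRealization φ γ ϑ₁ ϑ₂) (hobs : IsObservable γ ϑ₁ᴴ) (hctrl : IsObservable γᴴ ϑ₂ᴴ) :
    HasSymmetricRealization ι φ := by
  have hQ := posSemidef_self_mul_conjTranspose ϑ₂
  have hK := posSemidef_self_mul_conjTranspose ϑ₁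
  have hobs' : IsObservable (-Complex.I • γ) (ϑ₁ * ϑ₁ᴴ) := by
    simpa using (hobs.smul (neg_ne_zero.mpr Complex.I_ne_zero)).conjTranspose_mul_self
  have hctrl' : IsObservable (-Complex.I • γ)ᴴ (ϑ₂ * ϑ₂ᴴ) := by
    simpa [conjTranspose_smul] using (hctrl.smul Complex.I_ne_zero).conjTranspose_mul_self
  obtain ⟨X, hX, hR⟩ := exists_posSemidef_riccati_eq_zero hQ hK hobs'
  have hXdef := posDef_of_riccati_eq_zero hQ hctrl' hX hR
  obtain ⟨S, hS, rfl⟩ :=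
    CStarAlgebra.isStrictlyPositive_iff_eq_mul_star_self.mp hXdef.isStrictlyPositive
  have hSdet := (isUnit_iff_isUnit_det S).mp hS
  refine ⟨S⁻¹ * γ * S, Sᴴ * ϑ₁, S⁻¹ * ϑ₂, h.conj (mul_nonsing_inv S hSdet), ?_⟩
  exact sub_conjTranspose_of_riccati_eq_zero (nonsing_inv_mul S hSdet) hR

theorem IsRealization.hasSymmetricRealization_of_not_isObservable [Fintype ν] [Nonempty ν]
    (h : IsRealization φ γ ϑ₁ ϑ₂) (hγ : ¬ IsObservable γ ϑ₁ᴴ) (f : ι ≃ κ ⊕ Unit)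
    (ih : ∀ (φ' : ℂ → Matrix ν ν ℂ) (α : Matrix κ κ ℂ) (a c : Matrix κ ν ℂ),
      IsRealization φ' α a c → HasSymmetricRealization κ φ') :
    HasSymmetricRealization ι φ := by
  obtain ⟨e, w, α, a, c, hα⟩ := h.exists_update_of_not_isObservable hγ f
  exact (ih _ α a c hα).sum_unit.reindex f.symm

theorem IsRealization.hasSymmetricRealization [Fintype ν] [Nonempty ν] :
    ∀ {n : ℕ} {φ : ℂ → Matrix ν ν ℂ} {γ : Matrix (Fin n) (Fin n) ℂ} {ϑ₁ ϑ₂ : Matrix (Fin n) ν ℂ},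
      IsRealization φ γ ϑ₁ ϑ₂ → HasSymmetricRealization (Fin n) φ
  | 0, _, _, _, _, h => h.hasSymmetricRealization_of_isObservable
      (fun _ _ _ _ ↦ Subsingleton.elim _ _) (fun _ _ _ _ ↦ Subsingleton.elim _ _)
  | n + 1, φ, γ, ϑ₁, ϑ₂, h => by
    have f : Fin (n + 1) ≃ Fin n ⊕ Unit := Fintype.equivOfCardEq (by simp)
    have ih : ∀ (φ' : ℂ → Matrix ν ν ℂ) (α : Matrix (Fin n) (Fin n) ℂ) (a c : Matrix (Fin n) ν ℂ),
        IsRealization φ' α a c → HasSymmetricRealization (Fin n) φ' :=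
      fun _ _ _ _ ↦ hasSymmetricRealization
    by_cases hobs : IsObservable γ ϑ₁ᴴ
    · by_cases hctrl : IsObservable γᴴ ϑ₂ᴴ
      · exact h.hasSymmetricRealization_of_isObservable hobs hctrl
      · exact (h.adjoint.hasSymmetricRealization_of_not_isObservable hctrl f ih).of_adjoint
    · exact h.hasSymmetricRealization_of_not_isObservable hobs f ih

theorem stmt17_general {ι ν : Type*} [Fintype ι] [DecidableEq ι] [Fintype ν]
    {φ : ℂ → Matrix ν ν ℂ} {γ : Matrix ι ι ℂ} {ϑ₁ ϑ₂ : Matrix ι ν ℂ}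
    (h : IsRealization φ γ ϑ₁ ϑ₂) : HasSymmetricRealization ι φ := by
  rcases isEmpty_or_nonempty ν with _ | _
  · exact ⟨0, 0, 0, fun _ _ ↦ Subsingleton.elim _ _, by simp⟩
  · let e := Fintype.equivFin ι
    exact (h.reindex e).hasSymmetricRealization.reindex e.symm

end Realization

/-- every strictly proper rational matrix function (given here by a minimal
realization `φ(λ) = i ϑ₁ᴴ (λI − γ)⁻¹ ϑ₂` of state-space dimension `n`) admits a minimal
realization `φ(λ) = i θ₁ᴴ (λI − β)⁻¹ θ₂` (again of dimension `n`, hence minimal) with the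
additional symmetry property `β − βᴴ = i(θ₁θ₁ᴴ − θ₂θ₂ᴴ)`. -/
theorem stmt17 {m n : ℕ}
    (φ : ℂ → Matrix (Fin m) (Fin m) ℂ)
    (γ : Matrix (Fin n) (Fin n) ℂ)
    (ϑ₁ ϑ₂ : Matrix (Fin n) (Fin m) ℂ)
    (hreal : ∀ lam : ℂ, IsUnit (lam • (1 : Matrix (Fin n) (Fin n) ℂ) - γ) →
      φ lam = Complex.I • (ϑ₁ᴴ * (lam • (1 : Matrix (Fin n) (Fin n) ℂ) - γ)⁻¹ * ϑ₂))
    (hmin : ∀ (n' : ℕ) (γ' : Matrix (Fin n') (Fin n') ℂ)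
      (ϑ₁' ϑ₂' : Matrix (Fin n') (Fin m) ℂ),
      (∀ lam : ℂ, IsUnit (lam • (1 : Matrix (Fin n') (Fin n') ℂ) - γ') →
        φ lam = Complex.I • (ϑ₁'ᴴ * (lam • (1 : Matrix (Fin n') (Fin n') ℂ) - γ')⁻¹ * ϑ₂')) →
      n ≤ n') :
    ∃ (β : Matrix (Fin n) (Fin n) ℂ) (θ₁ θ₂ : Matrix (Fin n) (Fin m) ℂ),
      (∀ lam : ℂ, IsUnit (lam • (1 : Matrix (Fin n) (Fin n) ℂ) - β) →
        φ lam = Complex.I • (θ₁ᴴ * (lam • (1 : Matrix (Fin n) (Fin n) ℂ) - β)⁻¹ * θ₂)) ∧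
      β - βᴴ = Complex.I • (θ₁ * θ₁ᴴ - θ₂ * θ₂ᴴ) :=
  stmt17_general hreal
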